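/- arXiv:1811.01759 — 4 statements merged into one kernel-verified Lean document; each statement's English description precedes it below -/
import Mathlib

section
/- Let n ∈ ℕ, let λ : Fin n → ℝ and λ₁ > 0 satisfy λ₁ ≤ λ i for all i, let ρ ∈ [0,1] and let 0 ≤ s < t. Then for every x in the Euclidean space ℝⁿ, the vector y defined coordinatewise by y i = (λ i)^(−ρ) · (exp(−(λ i) s) − exp(−(λ i) t)) · x i satisfies ‖y‖ ≤ (t − s)^ρ · exp(−λ₁ s / 2) · ‖x‖, where ‖·‖ is the Euclidean norm. -/
/-!
The operator is diagonal, so its norm is at most the largest absolute value of its entries. Writing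
`u = λ i * (t - s)`, the `i`-th entry is
`(λ i)^(-ρ) * exp (-(λ i) s) * (1 - exp (-u))`. Since `1 - exp (-u) ≤ min 1 u ≤ u ^ ρ`
for `ρ ∈ [0,1]` (`one_sub_exp_neg_le_rpow`), the powers of `λ i` cancel and the entry is at most
`(t - s)^ρ * exp (-(λ i) s)`, which is stronger than the required bound because
`λ i * s ≥ λ₁ * s / 2`.
-/

lemma one_sub_exp_neg_le_rpow {u ρ : ℝ} (hu : 0 < u) (hρ0 : 0 ≤ ρ) (hρ1 : ρ ≤ 1) :
    1 - Real.exp (-u) ≤ u ^ ρ := by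
  rcases le_total u 1 with h | h
  · have h1 : u ^ (1 : ℝ) ≤ u ^ ρ := Real.rpow_le_rpow_of_exponent_ge hu h hρ1
    rw [Real.rpow_one] at h1
    linarith [Real.add_one_le_exp (-u)]
  · linarith [Real.one_le_rpow h hρ0, Real.exp_pos (-u)]

/-- The bound on a single diagonal entry, for an eigenvalue `l ≥ l1`. -/
lemma abs_entry_le {l l1 ρ s t : ℝ} (hl1 : 0 < l1) (hl : l1 ≤ l) (hρ0 : 0 ≤ ρ) (hρ1 : ρ ≤ 1)
    (hs : 0 ≤ s) (hst : s < t) :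
    |l ^ (-ρ) * (Real.exp (-(l * s)) - Real.exp (-(l * t)))| ≤
      (t - s) ^ ρ * Real.exp (-(l1 * s) / 2) := by
  have hl0 : 0 < l := hl1.trans_le hl
  have hts : 0 < t - s := sub_pos.mpr hst
  have hfac : Real.exp (-(l * s)) - Real.exp (-(l * t)) =
      Real.exp (-(l * s)) * (1 - Real.exp (-(l * (t - s)))) := by
    rw [mul_sub, mul_one, ← Real.exp_add]
    ring_nf
  have hnn : 0 ≤ 1 - Real.exp (-(l * (t - s))) :=
    sub_nonneg.mpr (Real.exp_le_one_iff.mpr (by nlinarith [mul_pos hl0 hts]))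
  have hexp : Real.exp (-(l * s)) ≤ Real.exp (-(l1 * s) / 2) :=
    Real.exp_le_exp.mpr (by nlinarith [mul_le_mul_of_nonneg_right hl hs, mul_nonneg hl1.le hs])
  rw [hfac, abs_of_nonneg (by positivity)]
  calc l ^ (-ρ) * (Real.exp (-(l * s)) * (1 - Real.exp (-(l * (t - s)))))
      ≤ l ^ (-ρ) * (Real.exp (-(l1 * s) / 2) * (l * (t - s)) ^ ρ) := by
        gcongr
        exact one_sub_exp_neg_le_rpow (mul_pos hl0 hts) hρ0 hρ1
    _ = (t - s) ^ ρ * Real.exp (-(l1 * s) / 2) := by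
        rw [Real.mul_rpow hl0.le hts.le, Real.rpow_neg hl0.le]
        have : l ^ ρ ≠ 0 := (Real.rpow_pos_of_pos hl0 ρ).ne'
        field_simp

/-- Galerkin semigroup Hölder estimate in the eigenbasis: if
`y i = (λ i)^(-ρ) * (exp (-(λ i) s) - exp (-(λ i) t)) * x i` coordinatewise,
with `0 < λ₁ ≤ λ i`, `ρ ∈ [0,1]`, `0 ≤ s < t`, then
`‖y‖ ≤ (t - s)^ρ * exp (-λ₁ s / 2) * ‖x‖`. -/
theorem stmt_3 (n : ℕ) (lam : Fin n → ℝ) (lam1 : ℝ) (hlam1 : 0 < lam1)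
    (hle : ∀ i, lam1 ≤ lam i) (ρ : ℝ) (hρ0 : 0 ≤ ρ) (hρ1 : ρ ≤ 1)
    (s t : ℝ) (hs : 0 ≤ s) (hst : s < t)
    (x y : EuclideanSpace ℝ (Fin n))
    (hy : ∀ i, y i = (lam i) ^ (-ρ) * (Real.exp (-(lam i * s)) - Real.exp (-(lam i * t))) * x i) :
    ‖y‖ ≤ (t - s) ^ ρ * Real.exp (-(lam1 * s) / 2) * ‖x‖ := by
  have hC : 0 ≤ (t - s) ^ ρ * Real.exp (-(lam1 * s) / 2) :=
    mul_nonneg (Real.rpow_nonneg (sub_pos.mpr hst).le ρ) (Real.exp_pos _).le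
  refine (pow_le_pow_iff_left₀ (norm_nonneg y) (mul_nonneg hC (norm_nonneg x)) two_ne_zero).mp ?_
  rw [mul_pow, EuclideanSpace.real_norm_sq_eq, EuclideanSpace.real_norm_sq_eq, Finset.mul_sum]
  refine Finset.sum_le_sum fun i _ => ?_
  rw [hy i, mul_pow]
  exact mul_le_mul_of_nonneg_right
    (sq_le_sq' (abs_le.mp (abs_entry_le hlam1 (hle i) hρ0 hρ1 hs hst)).1
      (abs_le.mp (abs_entry_le hlam1 (hle i) hρ0 hρ1 hs hst)).2) (sq_nonneg _)
end

section
/- Let H be a real inner product space, let λ₁ > 0, L > 0 and L_F < λ₁ be real numbers, let τ satisfy 0 < τ ≤ (λ₁ − L_F)/(4L²), let E : H → H be a continuous linear map with operator norm ‖E‖ ≤ e^(−λ₁ τ), and let F : H → H be Lipschitz with constant L and one-sided Lipschitz with constant L_F. Then for every y ∈ H: ‖E(y + τ·F(y))‖² ≤ (1 + 2λ₁τ) e^(−2λ₁τ) ‖y‖² + e^(−2λ₁τ) ‖F(0)‖² (1 + 12 τ² L²)/(6 L²). -/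
/-!
Since `‖E‖² ≤ e^(-2λ₁τ)`, it suffices to bound `‖y + τ F(y)‖² = ‖y‖² + 2τ⟪y, F y⟫ + τ²‖F y‖²`.
Comparing `F y` with `F 0`, the one-sided condition gives `⟪y, F y⟫ ≤ L_F‖y‖² + ‖y‖‖F 0‖` and the
Lipschitz condition gives `‖F y‖² ≤ 2L²‖y‖² + 2‖F 0‖²`. The cross term is absorbed by the weighted
Young inequality `2τ‖y‖‖F 0‖ ≤ 6τ²L²‖y‖² + ‖F 0‖²/(6L²)`. The `‖y‖²` terms then carry the excess
`8τ²L² = 2τ · 4τL²`, which the step-size restriction bounds by `2τ(λ₁ - L_F)`.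
-/

open scoped RealInnerProductSpace

/-- Lyapunov-type one-step estimate for the exponential Euler scheme:
`‖E (y + τ • F y)‖² ≤ (1 + 2λ₁τ) e^(-2λ₁τ) ‖y‖² + e^(-2λ₁τ) ‖F 0‖² (1 + 12τ²L²)/(6L²)`. -/
theorem stmt_11 {H : Type*} [NormedAddCommGroup H] [InnerProductSpace ℝ H]
    (lam1 L L_F τ : ℝ) (hlam1 : 0 < lam1) (hL : 0 < L) (hLF : L_F < lam1)
    (hτ0 : 0 < τ) (hτ : τ ≤ (lam1 - L_F) / (4 * L ^ 2))
    (E : H →L[ℝ] H) (hE : ‖E‖ ≤ Real.exp (-(lam1 * τ)))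
    (F : H → H)
    (hFlip : ∀ φ₁ φ₂ : H, ‖F φ₁ - F φ₂‖ ≤ L * ‖φ₁ - φ₂‖)
    (hFone : ∀ φ₁ φ₂ : H, ⟪φ₁ - φ₂, F φ₁ - F φ₂⟫ ≤ L_F * ‖φ₁ - φ₂‖ ^ 2)
    (y : H) :
    ‖E (y + τ • F y)‖ ^ 2 ≤
      (1 + 2 * lam1 * τ) * Real.exp (-(2 * lam1 * τ)) * ‖y‖ ^ 2 +
        Real.exp (-(2 * lam1 * τ)) * ‖F 0‖ ^ 2 * (1 + 12 * τ ^ 2 * L ^ 2) / (6 * L ^ 2) := by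
  have hin : ⟪y, F y⟫ ≤ L_F * ‖y‖ ^ 2 + ‖y‖ * ‖F 0‖ := by
    have h1 := hFone y 0
    have h2 := real_inner_le_norm y (F 0)
    rw [sub_zero, inner_sub_right] at h1
    linarith
  have hFy : ‖F y‖ ^ 2 ≤ 2 * L ^ 2 * ‖y‖ ^ 2 + 2 * ‖F 0‖ ^ 2 := by
    have h1 := hFlip y 0
    rw [sub_zero] at h1
    have h2 : ‖F y‖ ≤ L * ‖y‖ + ‖F 0‖ := by
      linarith [norm_sub_norm_le (F y) (F 0)]
    calc ‖F y‖ ^ 2 ≤ (L * ‖y‖ + ‖F 0‖) ^ 2 := by gcongr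
      _ ≤ 2 * L ^ 2 * ‖y‖ ^ 2 + 2 * ‖F 0‖ ^ 2 := by
        linarith [sq_nonneg (L * ‖y‖ - ‖F 0‖)]
  have hyoung : 2 * τ * (‖y‖ * ‖F 0‖) ≤
      6 * τ ^ 2 * L ^ 2 * ‖y‖ ^ 2 + ‖F 0‖ ^ 2 / (6 * L ^ 2) := by
    have h1 : 6 * τ ^ 2 * L ^ 2 * ‖y‖ ^ 2 + ‖F 0‖ ^ 2 / (6 * L ^ 2) - 2 * τ * (‖y‖ * ‖F 0‖) =
        (6 * τ * L ^ 2 * ‖y‖ - ‖F 0‖) ^ 2 / (6 * L ^ 2) := by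
      field_simp
      ring
    have h2 : 0 ≤ (6 * τ * L ^ 2 * ‖y‖ - ‖F 0‖) ^ 2 / (6 * L ^ 2) := by positivity
    linarith
  have hstep : τ * (4 * L ^ 2) ≤ lam1 - L_F := (le_div_iff₀ (by positivity)).mp hτ
  have hkey : ‖y + τ • F y‖ ^ 2 ≤
      (1 + 2 * lam1 * τ) * ‖y‖ ^ 2 + (‖F 0‖ ^ 2 / (6 * L ^ 2) + 2 * τ ^ 2 * ‖F 0‖ ^ 2) := by
    rw [norm_add_sq_real, inner_smul_right, norm_smul, mul_pow, Real.norm_eq_abs, sq_abs]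
    have h1 := mul_le_mul_of_nonneg_left hin (by positivity : 0 ≤ 2 * τ)
    have h2 := mul_le_mul_of_nonneg_left hFy (sq_nonneg τ)
    have h3 := mul_le_mul_of_nonneg_right hstep (by positivity : 0 ≤ 2 * τ * ‖y‖ ^ 2)
    linarith
  have hexp : Real.exp (-(2 * lam1 * τ)) = Real.exp (-(lam1 * τ)) ^ 2 := by
    rw [← Real.exp_nat_mul]
    congr 1
    push_cast
    ring
  calc ‖E (y + τ • F y)‖ ^ 2 ≤ (Real.exp (-(lam1 * τ)) * ‖y + τ • F y‖) ^ 2 := by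
        gcongr
        exact E.le_of_opNorm_le hE _
    _ = Real.exp (-(2 * lam1 * τ)) * ‖y + τ • F y‖ ^ 2 := by rw [mul_pow, hexp]
    _ ≤ Real.exp (-(2 * lam1 * τ)) * ((1 + 2 * lam1 * τ) * ‖y‖ ^ 2 +
          (‖F 0‖ ^ 2 / (6 * L ^ 2) + 2 * τ ^ 2 * ‖F 0‖ ^ 2)) := by gcongr
    _ = _ := by
      field_simp
      ring
end

section
/- Let H be a real inner product space, let λ₁ > 0, L > 0 and L_F < λ₁ be real numbers, let τ > 0, let E : H → H be a continuous linear map with operator norm ‖E‖ ≤ e^(−λ₁ τ), and let F : H → H be Lipschitz with constant L and one-sided Lipschitz with constant L_F. Then for all y, o ∈ H: ‖E(y + τ·F(y + o))‖² ≤ e^(−2λ₁τ) [ (1 + 2τL_F + 2τ²L² + ((λ₁ − L_F)/2)τ) ‖y‖² + 2(τ² + τ/(λ₁ − L_F)) ‖F(o)‖² ]. -/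
/-!
Write `F (y + o) = D + F o` with `D = F (y + o) - F o` and expand `‖y + τ • (D + F o)‖²`. The
one-sided Lipschitz condition bounds `⟪y, D⟫`, Young's inequality with weight
`(lam1 - L_F) / 2` bounds `⟪y, F o⟫`, and `‖D + F o‖² ≤ 2 ‖D‖² + 2 ‖F o‖²` together with the
Lipschitz bound on `D` controls the quadratic term. The operator norm of `E` contributes the
exponential factor.
-/

open scoped RealInnerProductSpace

/-- One-step recursion estimate for the perturbed exponential Euler iteration:
`‖E (y + τ • F (y + o))‖² ≤ e^(-2λ₁τ) [(1 + 2τL_F + 2τ²L² + ((λ₁-L_F)/2)τ)‖y‖²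
  + 2(τ² + τ/(λ₁-L_F))‖F o‖²]`. -/
theorem stmt_12 {H : Type*} [NormedAddCommGroup H] [InnerProductSpace ℝ H]
    (lam1 L L_F τ : ℝ) (hlam1 : 0 < lam1) (hL : 0 < L) (hLF : L_F < lam1) (hτ : 0 < τ)
    (E : H →L[ℝ] H) (hE : ‖E‖ ≤ Real.exp (-(lam1 * τ)))
    (F : H → H)
    (hFlip : ∀ φ₁ φ₂ : H, ‖F φ₁ - F φ₂‖ ≤ L * ‖φ₁ - φ₂‖)
    (hFone : ∀ φ₁ φ₂ : H, ⟪φ₁ - φ₂, F φ₁ - F φ₂⟫ ≤ L_F * ‖φ₁ - φ₂‖ ^ 2)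
    (y o : H) :
    ‖E (y + τ • F (y + o))‖ ^ 2 ≤
      Real.exp (-(2 * lam1 * τ)) *
        ((1 + 2 * τ * L_F + 2 * τ ^ 2 * L ^ 2 + ((lam1 - L_F) / 2) * τ) * ‖y‖ ^ 2 +
          2 * (τ ^ 2 + τ / (lam1 - L_F)) * ‖F o‖ ^ 2) := by
  have hδ : 0 < lam1 - L_F := sub_pos.mpr hLF
  set δ := lam1 - L_F
  obtain ⟨D, hD⟩ : ∃ D, D = F (y + o) - F o := ⟨_, rfl⟩
  have hFD : F (y + o) = D + F o := by rw [hD]; abel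
  have h1 : ‖D‖ ≤ L * ‖y‖ := by simpa [hD] using hFlip (y + o) o
  have h2 : ⟪y, D⟫ ≤ L_F * ‖y‖ ^ 2 := by simpa [hD] using hFone (y + o) o
  have h3 : ‖D‖ ^ 2 ≤ L ^ 2 * ‖y‖ ^ 2 := by
    rw [← mul_pow]; gcongr
  have h4 : ‖D + F o‖ ^ 2 ≤ 2 * ‖D‖ ^ 2 + 2 * ‖F o‖ ^ 2 := by
    have := parallelogram_law_with_norm ℝ D (F o)
    nlinarith [sq_nonneg ‖D - F o‖]
  -- Young's inequality, weighted so that the `‖y‖²` term costs only `δ / 2`.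
  have h5 : 2 * ⟪y, F o⟫ ≤ δ / 2 * ‖y‖ ^ 2 + 2 / δ * ‖F o‖ ^ 2 := by
    have hcs := real_inner_le_norm y (F o)
    have hsq : δ / 2 * ‖y‖ ^ 2 + 2 / δ * ‖F o‖ ^ 2 - 2 * (‖y‖ * ‖F o‖)
        = (δ * ‖y‖ - 2 * ‖F o‖) ^ 2 / (2 * δ) := by
      field_simp
      ring
    have : 0 ≤ (δ * ‖y‖ - 2 * ‖F o‖) ^ 2 / (2 * δ) := by positivity
    linarith
  have hexpand : ‖y + τ • F (y + o)‖ ^ 2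
      = ‖y‖ ^ 2 + 2 * τ * ⟪y, D⟫ + τ * (2 * ⟪y, F o⟫) + τ ^ 2 * ‖D + F o‖ ^ 2 := by
    rw [hFD, norm_add_sq_real, norm_smul, real_inner_smul_right, inner_add_right, mul_pow,
      Real.norm_eq_abs, sq_abs]
    ring
  have hmain : ‖y + τ • F (y + o)‖ ^ 2 ≤
      (1 + 2 * τ * L_F + 2 * τ ^ 2 * L ^ 2 + (δ / 2) * τ) * ‖y‖ ^ 2 +
        2 * (τ ^ 2 + τ / δ) * ‖F o‖ ^ 2 := by
    have e2 := mul_le_mul_of_nonneg_left h2 (by positivity : 0 ≤ 2 * τ)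
    have e4 := mul_le_mul_of_nonneg_left
      (h4.trans (by gcongr : _ ≤ 2 * (L ^ 2 * ‖y‖ ^ 2) + 2 * ‖F o‖ ^ 2)) (sq_nonneg τ)
    have e5 := mul_le_mul_of_nonneg_left h5 hτ.le
    rw [hexpand]
    calc _ ≤ ‖y‖ ^ 2 + 2 * τ * (L_F * ‖y‖ ^ 2)
          + τ * (δ / 2 * ‖y‖ ^ 2 + 2 / δ * ‖F o‖ ^ 2)
          + τ ^ 2 * (2 * (L ^ 2 * ‖y‖ ^ 2) + 2 * ‖F o‖ ^ 2) := by linarith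
      _ = _ := by ring
  have hexp : Real.exp (-(2 * lam1 * τ)) = Real.exp (-(lam1 * τ)) ^ 2 := by
    rw [← Real.exp_nat_mul]; congr 1; push_cast; ring
  calc ‖E (y + τ • F (y + o))‖ ^ 2
      ≤ (Real.exp (-(lam1 * τ)) * ‖y + τ • F (y + o)‖) ^ 2 := by
        gcongr; exact E.le_of_opNorm_le hE _
    _ = Real.exp (-(2 * lam1 * τ)) * ‖y + τ • F (y + o)‖ ^ 2 := by rw [hexp, mul_pow]
    _ ≤ _ := by gcongr
end

section
/- Let H be a real inner product space, let c > 0, C₀ ≥ 0 and L ≥ 0 be real numbers, let A : H → H be a linear map, and let F : H → H be Lipschitz with constant L and satisfy ⟨Aφ + F(φ), φ⟩ ≤ −c‖φ‖² + C₀ for all φ ∈ H. Let O : ℝ → H be continuous and let y : ℝ → H be differentiable on [0,∞) with y′(t) = A(y(t)) + F(y(t) + O(t)) for all t ≥ 0. Then for every t ≥ 0: e^(ct) ‖y(t)‖² ≤ ‖y(0)‖² + (2C₀/c)(e^(ct) − 1) + (L²/c) ∫₀^t e^(cs) ‖O(s)‖² ds. -/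
/-!
Dissipativity at `y` and the Lipschitz bound give
`2⟪y', y⟫ ≤ -2c‖y‖² + 2C₀ + 2L‖O‖‖y‖`, and Young's inequality
`2L‖O‖‖y‖ ≤ c‖y‖² + (L²/c)‖O‖²` absorbs half of the damping (`two_inner_drift_le`).
Hence `d/dt (e^(ct)‖y‖²) ≤ e^(ct) (2C₀ + (L²/c)‖O‖²)`, whose right-hand side is the derivative of
the claimed upper bound; the difference of the two sides is therefore monotone on `[0,∞)`, and it
vanishes at `0`.
-/

open scoped RealInnerProductSpace

/-- Energy inequality for the shifted drift: the perturbation of the argument of `F` costs half of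
the dissipation rate. -/
lemma two_inner_drift_le {H : Type*} [NormedAddCommGroup H] [InnerProductSpace ℝ H]
    {c C₀ L : ℝ} (hc : 0 < c) (A : H →ₗ[ℝ] H) (F : H → H)
    (hFlip : ∀ φ₁ φ₂ : H, ‖F φ₁ - F φ₂‖ ≤ L * ‖φ₁ - φ₂‖)
    (hdis : ∀ φ : H, ⟪A φ + F φ, φ⟫ ≤ -c * ‖φ‖ ^ 2 + C₀) (u o : H) :
    2 * ⟪u, A u + F (u + o)⟫ ≤ -c * ‖u‖ ^ 2 + 2 * C₀ + L ^ 2 / c * ‖o‖ ^ 2 := by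
  have hsplit : ⟪u, A u + F (u + o)⟫ = ⟪A u + F u, u⟫ + ⟪F (u + o) - F u, u⟫ := by
    rw [real_inner_comm, ← inner_add_left]
    congr 1
    abel
  have hF : ‖F (u + o) - F u‖ ≤ L * ‖o‖ := by simpa using hFlip (u + o) u
  have hcs : ⟪F (u + o) - F u, u⟫ ≤ L * ‖o‖ * ‖u‖ :=
    (real_inner_le_norm _ _).trans (by gcongr)
  have hyoung : 2 * (L * ‖o‖ * ‖u‖) ≤ c * ‖u‖ ^ 2 + L ^ 2 / c * ‖o‖ ^ 2 := by
    have h : c * ‖u‖ ^ 2 + L ^ 2 / c * ‖o‖ ^ 2 - 2 * (L * ‖o‖ * ‖u‖)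
        = (c * ‖u‖ - L * ‖o‖) ^ 2 / c := by
      field_simp
      ring
    have : 0 ≤ (c * ‖u‖ - L * ‖o‖) ^ 2 / c := by positivity
    linarith
  have := hdis u
  linarith

/-- Pathwise energy estimate: if `y′(t) = A (y t) + F (y t + O t)` on `[0,∞)`, with `F`
Lipschitz with constant `L`, strong dissipativity `⟪Aφ + Fφ, φ⟫ ≤ -c‖φ‖² + C₀`, and `O`
continuous, then
`e^(ct) ‖y t‖² ≤ ‖y 0‖² + (2C₀/c)(e^(ct) - 1) + (L²/c) ∫₀^t e^(cs) ‖O s‖² ds`. -/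
theorem stmt_17 {H : Type*} [NormedAddCommGroup H] [InnerProductSpace ℝ H]
    (c C₀ L : ℝ) (hc : 0 < c) (hC₀ : 0 ≤ C₀) (hL : 0 ≤ L)
    (A : H →ₗ[ℝ] H) (F : H → H)
    (hFlip : ∀ φ₁ φ₂ : H, ‖F φ₁ - F φ₂‖ ≤ L * ‖φ₁ - φ₂‖)
    (hdis : ∀ φ : H, ⟪A φ + F φ, φ⟫ ≤ -c * ‖φ‖ ^ 2 + C₀)
    (O : ℝ → H) (hO : Continuous O)
    (y : ℝ → H)
    (hy : ∀ t ≥ (0:ℝ), HasDerivWithinAt y (A (y t) + F (y t + O t)) (Set.Ici 0) t) :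
    ∀ t ≥ (0:ℝ),
      Real.exp (c * t) * ‖y t‖ ^ 2 ≤
        ‖y 0‖ ^ 2 + (2 * C₀ / c) * (Real.exp (c * t) - 1) +
          (L ^ 2 / c) * ∫ s in (0:ℝ)..t, Real.exp (c * s) * ‖O s‖ ^ 2 := by
  have hg : Continuous fun s : ℝ => Real.exp (c * s) * ‖O s‖ ^ 2 := by fun_prop
  set G : ℝ → ℝ := fun t => ‖y 0‖ ^ 2 + (2 * C₀ / c) * (Real.exp (c * t) - 1) +
    (L ^ 2 / c) * (∫ s in (0:ℝ)..t, Real.exp (c * s) * ‖O s‖ ^ 2) -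
      Real.exp (c * t) * ‖y t‖ ^ 2 with hG
  have hderiv : ∀ t ≥ (0:ℝ), HasDerivWithinAt G
      ((2 * C₀ / c) * (Real.exp (c * t) * c) + (L ^ 2 / c) * (Real.exp (c * t) * ‖O t‖ ^ 2) -
        (Real.exp (c * t) * c * ‖y t‖ ^ 2 +
          Real.exp (c * t) * (2 * ⟪y t, A (y t) + F (y t + O t)⟫))) (Set.Ici 0) t := by
    intro t ht
    have hexp : HasDerivAt (fun t : ℝ => Real.exp (c * t)) (Real.exp (c * t) * c) t := by
      simpa using ((hasDerivAt_id t).const_mul c).exp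
    have hint : HasDerivAt (fun t : ℝ => ∫ s in (0:ℝ)..t, Real.exp (c * s) * ‖O s‖ ^ 2)
        (Real.exp (c * t) * ‖O t‖ ^ 2) t :=
      hg.integral_hasStrictDerivAt 0 t |>.hasDerivAt
    have hbound := (((hexp.sub_const 1).const_mul (2 * C₀ / c)).const_add (‖y 0‖ ^ 2)).add
      (hint.const_mul (L ^ 2 / c))
    exact hbound.hasDerivWithinAt.sub (hexp.hasDerivWithinAt.mul (hy t ht).norm_sq)
  have hmono : MonotoneOn G (Set.Ici 0) := by
    refine monotoneOn_of_hasDerivWithinAt_nonneg (convex_Ici 0)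
      (fun t ht => (hderiv t ht).continuousWithinAt)
      (fun t ht => (hderiv t (interior_subset ht)).mono interior_subset) fun t _ => ?_
    have hE := two_inner_drift_le hc A F hFlip hdis (y t) (O t)
    have h : (2 * C₀ / c) * (Real.exp (c * t) * c) +
        (L ^ 2 / c) * (Real.exp (c * t) * ‖O t‖ ^ 2) -
        (Real.exp (c * t) * c * ‖y t‖ ^ 2 +
          Real.exp (c * t) * (2 * ⟪y t, A (y t) + F (y t + O t)⟫)) =
        Real.exp (c * t) * (-c * ‖y t‖ ^ 2 + 2 * C₀ + L ^ 2 / c * ‖O t‖ ^ 2 -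
          2 * ⟪y t, A (y t) + F (y t + O t)⟫) := by
      field_simp
      ring
    rw [h]
    exact mul_nonneg (Real.exp_pos _).le (sub_nonneg.2 hE)
  intro t ht
  have h0 : G 0 = 0 := by simp [hG]
  have h := hmono Set.self_mem_Ici ht ht
  rw [h0] at h
  exact sub_nonneg.1 h
end
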